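/- Not every Π⁰₁ planar dendrite is almost computable: there exists a Π⁰₁ closed set H ⊆ ℝ² which is a dendrite, together with a real ε > 0, such that every computable closed set J ⊆ H which is a dendrite satisfies d_H(J, H) ≥ ε. -/

import Mathlib

open Set Metric

section TopDefs

variable {α : Type*} [TopologicalSpace α]

/-- `A ⊆ α` is an arc with endpoints `x` and `y`:
a homeomorphic (continuous injective) image of `[0,1]` sending `0 ↦ x`, `1 ↦ y`. -/
def IsArc (A : Set α) (x y : α) : Prop :=
  ∃ f : Set.Icc (0:ℝ) 1 → α, Continuous f ∧ Function.Injective f ∧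
    Set.range f = A ∧ f ⟨0, by norm_num⟩ = x ∧ f ⟨1, by norm_num⟩ = y

/-- A continuum: a nonempty compact connected set. -/
def IsContinuum (X : Set α) : Prop := IsCompact X ∧ IsConnected X

/-- Any two distinct points of `X` are endpoints of an arc contained in `X`. -/
def ArcwiseConnectedSet (X : Set α) : Prop :=
  ∀ x ∈ X, ∀ y ∈ X, x ≠ y → ∃ A, A ⊆ X ∧ IsArc A x y

/-- `X` is unicoherent: for all closed connected `A, B ⊆ X` with `A ∪ B = X`,
the intersection `A ∩ B` is connected. -/
def UnicoherentSet (X : Set α) : Prop :=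
  ∀ A B : Set α, A ⊆ X → B ⊆ X → IsClosed A → IsClosed B →
    IsConnected A → IsConnected B → A ∪ B = X → IsConnected (A ∩ B)

/-- Every subcontinuum of `X` is unicoherent. -/
def HereditarilyUnicoherent (X : Set α) : Prop :=
  ∀ Y, Y ⊆ X → IsContinuum Y → UnicoherentSet Y

/-- A dendroid: an arcwise connected, hereditarily unicoherent continuum. -/
def IsDendroid (X : Set α) : Prop :=
  IsContinuum X ∧ ArcwiseConnectedSet X ∧ HereditarilyUnicoherent X

/-- The unit circle `S¹`. -/
def unitCircle : Set (EuclideanSpace ℝ (Fin 2)) := Metric.sphere 0 1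

/-- A dendrite: a locally connected continuum containing no subset homeomorphic to `S¹`. -/
def IsDendrite (X : Set α) : Prop :=
  IsContinuum X ∧ LocallyConnectedSpace ↥X ∧
    ∀ S : Set α, S ⊆ X → IsEmpty (↥S ≃ₜ ↥unitCircle)

/-- `x` and `y` lie in the same arc-component of `Y`. -/
def SameArcComponent (Y : Set α) (x y : α) : Prop :=
  x = y ∨ ∃ A, A ⊆ Y ∧ IsArc A x y

/-- `x` is a ramification point of `X`: `X \ {x}` has at least three arc-components. -/
def IsRamificationPoint (X : Set α) (x : α) : Prop :=
  x ∈ X ∧ ∃ u v w, u ∈ X \ {x} ∧ v ∈ X \ {x} ∧ w ∈ X \ {x} ∧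
    ¬ SameArcComponent (X \ {x}) u v ∧ ¬ SameArcComponent (X \ {x}) u w ∧
    ¬ SameArcComponent (X \ {x}) v w

/-- A tree (as a continuum): a dendrite with finitely many ramification points. -/
def IsTreeContinuum (X : Set α) : Prop :=
  IsDendrite X ∧ {x | IsRamificationPoint X x}.Finite

end TopDefs

section CompDefs

/-- The rational open ball in `ℝ²` coded by `((q₁, q₂), r)`. -/
def ballOfCode (c : (ℚ × ℚ) × ℚ) : Set (ℝ × ℝ) :=
  {x | dist x (((c.1.1 : ℝ), (c.1.2 : ℝ)) : ℝ × ℝ) < (c.2 : ℝ)}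

/-- A closed set `F ⊆ ℝ²` is `Π⁰₁` if it is the complement of the union of the rational
open balls coded by some c.e. set of codes. -/
def IsPi01Closed (F : Set (ℝ × ℝ)) : Prop :=
  ∃ W : (ℚ × ℚ) × ℚ → Prop, REPred W ∧ F = Set.univ \ ⋃ c ∈ {c | W c}, ballOfCode c

/-- `F ⊆ ℝ²` is c.e. closed if the set of codes of rational open balls meeting `F` is c.e. -/
def IsCEClosed (F : Set (ℝ × ℝ)) : Prop :=
  REPred (fun c : (ℚ × ℚ) × ℚ => (F ∩ ballOfCode c).Nonempty)

/-- A computable closed subset of `ℝ²`: both `Π⁰₁` and c.e. closed. -/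
def IsComputableClosed (F : Set (ℝ × ℝ)) : Prop :=
  IsPi01Closed F ∧ IsCEClosed F

/-- A point of `ℝ²` is computable if the set of codes of rational open balls
containing it is c.e. -/
def IsComputablePoint (x : ℝ × ℝ) : Prop :=
  REPred (fun c : (ℚ × ℚ) × ℚ => x ∈ ballOfCode c)

end CompDefs

section PsiDefs

/-- A tree of binary strings: a set of finite binary strings closed under prefixes. -/
def IsTreeOfStrings (T : Set (List Bool)) : Prop :=
  ∀ σ ∈ T, ∀ τ : List Bool, τ <+: σ → τ ∈ T

/-- The point `ψ(σ) ∈ ℝ²` associated with the binary string `σ`. -/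
noncomputable def psiPt (σ : List Bool) : ℝ × ℝ :=
  ((3:ℝ) ^ (-(σ.length : ℤ)) / 2 +
      2 * ∑ i ∈ Finset.range σ.length,
        (if σ.getD i false then (3:ℝ) ^ (-((i : ℤ) + 1)) else 0),
    (2:ℝ) ^ (-(σ.length : ℤ)))

/-- The planar embedding `Ψ(T)` of a tree `T` of binary strings: the closure of the union
of the segments from `ψ(σ⁻)` to `ψ(σ)` over nonempty `σ ∈ T` (together with the points
`ψ(σ)`, `σ ∈ T`, which makes no difference except for the degenerate trees `∅`, `{⟨⟩}`). -/
noncomputable def PsiSet (T : Set (List Bool)) : Set (ℝ × ℝ) :=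
  closure (psiPt '' T ∪ ⋃ σ ∈ T, ⋃ (_ : σ ≠ []), segment ℝ (psiPt σ.dropLast) (psiPt σ))

end PsiDefs

/-!
Fix disjoint, computably inseparable c.e. sets `A` and `B`. Cut `(0, 1]` into the tiles
`[2⁻ⁿ / 2, 2⁻ⁿ]` and start from the segment `[-1, 1] × {0}` with a vertical whisker of length `2⁻ⁿ`
at the centre of every tile. When `n` enters `A`, delete the whisker. When `n` enters `B` at
stage `s`, replace the whisker and the piece of the segment below it by an arch of half-width at
most `2⁻ˢ` through the tip of the whisker. An arch lies so close to the whisker it replaces that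
none of its points has to be excluded before stage `s`, so the resulting dendrite is `Π⁰₁`.

A subcontinuum at Hausdorff distance less than `1 / 8` almost reaches both ends of the segment,
hence it crosses every arch and contains its tip. If it is computable as a closed set, then one can
effectively choose, for every `n`, a true one among the statements that it misses the tip over `n`
and that it comes close to that tip: the first is false for `n ∈ B` and the second is false for
`n ∈ A`, so the choice would separate `A` from `B`.
-/

open Topology
open Encodable Denumerable

/-! ### Computable and computably enumerable predicates -/

section Predicates

variable {α β : Type*} [Primcodable α] [Primcodable β]

theorem computablePred_and {p q : α → Prop} (hp : ComputablePred p) (hq : ComputablePred q) :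
    ComputablePred fun a => p a ∧ q a := by
  classical
  exact Computable.computablePred ((Primrec.and.to_comp.comp hp.decide hq.decide).of_eq
    fun a => (Bool.decide_and (p a) (q a)).symm)

theorem computablePred_or {p q : α → Prop} (hp : ComputablePred p) (hq : ComputablePred q) :
    ComputablePred fun a => p a ∨ q a := by
  classical
  exact Computable.computablePred ((Primrec.or.to_comp.comp hp.decide hq.decide).of_eq
    fun a => (Bool.decide_or (p a) (q a)).symm)

theorem computablePred_comp {p : β → Prop} {f : α → β} (hp : ComputablePred p)
    (hf : Computable f) : ComputablePred fun a => p (f a) := by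
  classical
  exact Computable.computablePred (hp.decide.comp hf)

theorem computablePred_eq {f g : α → β} (hf : Computable f) (hg : Computable g) :
    ComputablePred fun a => f a = g a := by
  classical
  exact computablePred_comp (p := fun x : β × β => x.1 = x.2)
    (PrimrecPred.computablePred Primrec.eq) (hf.pair hg)

theorem computablePred_nat_le {f g : α → ℕ} (hf : Computable f) (hg : Computable g) :
    ComputablePred fun a => f a ≤ g a :=
  computablePred_comp (p := fun x : ℕ × ℕ => x.1 ≤ x.2)
    (PrimrecPred.computablePred Primrec.nat_le) (hf.pair hg)

theorem rePred_comp {p : β → Prop} {f : α → β} (hp : REPred p) (hf : Computable f) :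
    REPred fun a => p (f a) :=
  Partrec.comp hp hf

theorem rePred_exists_of_computablePred {R : α × ℕ → Prop} (hR : ComputablePred R) :
    REPred fun a => ∃ k, R (a, k) := by
  classical
  have hsearch : Partrec fun a => Nat.rfind fun k => Part.some (decide (R (a, k))) :=
    Partrec.rfind hR.decide.partrec
  exact (Partrec.dom_re hsearch).of_eq fun a => Nat.rfind_dom'.trans (by simp)

/-- The converse of `rePred_exists_of_computablePred`: run a program for `p` for `k` steps. -/
theorem exists_computable_stages {p : α → Prop} (hp : REPred p) :
    ∃ R : α → ℕ → Prop, (ComputablePred fun x : α × ℕ => R x.1 x.2) ∧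
      (∀ a, Monotone (R a)) ∧ (∀ a, ¬ R a 0) ∧ ∀ a, p a ↔ ∃ k, R a k := by
  obtain ⟨c, hc⟩ := Nat.Partrec.Code.exists_code.1 hp
  have dom_iff (a : α) : (Nat.Partrec.Code.eval c (encode a)).Dom ↔ p a := by
    simp [hc, Part.assert]
  refine ⟨fun a k => (Nat.Partrec.Code.evaln k c (encode a)).isSome, ?_, fun a k l hkl hk => ?_,
    fun a => by simp [Nat.Partrec.Code.evaln], fun a => ?_⟩
  · exact computablePred_eq (Primrec.option_isSome.to_comp.comp
      (Nat.Partrec.Code.primrec_evaln.to_comp.comp ((Computable.snd.pair (Computable.const c)).pair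
        (Computable.encode.comp Computable.fst)))) (Computable.const true)
  · obtain ⟨y, hy⟩ := Option.isSome_iff_exists.1 hk
    exact Option.isSome_iff_exists.2 ⟨y, Nat.Partrec.Code.evaln_mono hkl hy⟩
  · simp only [← dom_iff, Part.dom_iff_mem, Nat.Partrec.Code.evaln_complete,
      Option.isSome_iff_exists, Option.mem_def]
    exact exists_comm

theorem rePred_and {p q : α → Prop} (hp : REPred p) (hq : REPred q) :
    REPred fun a => p a ∧ q a := by
  obtain ⟨R, hR, hR_mono, -, hpR⟩ := exists_computable_stages hp
  obtain ⟨S, hS, hS_mono, -, hqS⟩ := exists_computable_stages hq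
  refine (rePred_exists_of_computablePred (computablePred_and hR hS)).of_eq fun a => ?_
  rw [hpR, hqS]
  constructor
  · rintro ⟨k, hRk, hSk⟩
    exact ⟨⟨k, hRk⟩, k, hSk⟩
  · rintro ⟨⟨k, hRk⟩, l, hSl⟩
    exact ⟨max k l, hR_mono a (le_max_left k l) hRk, hS_mono a (le_max_right k l) hSl⟩

theorem rePred_or {p q : α → Prop} (hp : REPred p) (hq : REPred q) :
    REPred fun a => p a ∨ q a := by
  obtain ⟨R, hR, -, -, hpR⟩ := exists_computable_stages hp
  obtain ⟨S, hS, -, -, hqS⟩ := exists_computable_stages hq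
  refine (rePred_exists_of_computablePred (computablePred_or hR hS)).of_eq fun a => ?_
  rw [hpR, hqS, exists_or]

theorem rePred_exists {γ : Type*} [Denumerable γ] {p : α × γ → Prop} (hp : REPred p) :
    REPred fun a => ∃ b, p (a, b) := by
  obtain ⟨R, hR, -, -, hpR⟩ := exists_computable_stages hp
  have hunpair : Computable fun x : α × ℕ => x.2.unpair :=
    Primrec.unpair.to_comp.comp Computable.snd
  have hdecode : Computable fun x : α × ℕ => ((x.1, ofNat γ x.2.unpair.1), x.2.unpair.2) :=
    (Computable.fst.pair ((Computable.ofNat γ).comp (Computable.fst.comp hunpair))).pair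
      (Computable.snd.comp hunpair)
  refine (rePred_exists_of_computablePred (computablePred_comp hR hdecode)).of_eq
    fun a => ⟨?_, ?_⟩
  · rintro ⟨k, hk⟩
    exact ⟨_, (hpR _).2 ⟨_, hk⟩⟩
  · rintro ⟨b, hb⟩
    obtain ⟨k, hk⟩ := (hpR _).1 hb
    exact ⟨Nat.pair (encode b) k, by simpa using hk⟩

theorem exists_computablePred_of_forall_or {p q : α → Prop} (hp : REPred p) (hq : REPred q)
    (hpq : ∀ a, p a ∨ q a) :
    ∃ C : α → Prop, ComputablePred C ∧ (∀ a, C a → p a) ∧ ∀ a, ¬ C a → q a := by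
  classical
  obtain ⟨R, hR, -, -, hpR⟩ := exists_computable_stages hp
  obtain ⟨S, hS, -, -, hqS⟩ := exists_computable_stages hq
  have hstage (a : α) : ∃ k, R a k ∨ S a k := by
    rw [exists_or, ← hpR, ← hqS]
    exact hpq a
  have hfind : Computable fun a => Nat.find (hstage a) :=
    Computable.find (P := fun a k => R a k ∨ S a k) (computablePred_or hR hS) hstage
  exact ⟨fun a => R a (Nat.find (hstage a)), computablePred_comp hR (Computable.id.pair hfind),
    fun a ha => (hpR a).2 ⟨_, ha⟩,
    fun a ha => (hqS a).2 ⟨_, (Nat.find_spec (hstage a)).resolve_left ha⟩⟩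

end Predicates

section Inseparable

/-- Two predicates on `ℕ` that no computable predicate separates. -/
def ComputablyInseparable (A B : ℕ → Prop) : Prop :=
  ∀ C : ℕ → Prop, ComputablePred C → (∀ n, A n → ¬ C n) → (∀ n, B n → C n) → False

/-- Diagonalisation: with `φₙ` the `n`-th partial computable function, let `A` and `B` be
`{n | φₙ(n) = 1}` and `{n | φₙ(n) = 0}`. -/
theorem exists_computablyInseparable :
    ∃ A B : ℕ → Prop, REPred A ∧ REPred B ∧ (∀ n, A n → ¬ B n) ∧ ComputablyInseparable A B := by
  classical
  let φ (n : ℕ) : Part ℕ := (ofNat Nat.Partrec.Code n).eval n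
  have re_mem (b : ℕ) : REPred fun n => b ∈ φ n := by
    have hsteps : Computable fun x : ℕ × ℕ =>
        Nat.Partrec.Code.evaln x.2 (ofNat Nat.Partrec.Code x.1) x.1 :=
      Nat.Partrec.Code.primrec_evaln.to_comp.comp
        ((Computable.snd.pair ((Computable.ofNat _).comp Computable.fst)).pair Computable.fst)
    exact (rePred_exists_of_computablePred
      (computablePred_eq hsteps (Computable.const (some b)))).of_eq
        fun n => (Nat.Partrec.Code.evaln_complete (c := ofNat _ n) (n := n)).symm
  refine ⟨fun n => 1 ∈ φ n, fun n => 0 ∈ φ n, re_mem 1, re_mem 0,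
    fun n h1 h0 => one_ne_zero (Part.mem_unique h1 h0), fun C hC hA hB => ?_⟩
  obtain ⟨c, hc⟩ := Nat.Partrec.Code.exists_code.1 (Partrec.nat_iff.1
    (Computable.cond hC.decide (Computable.const 1) (Computable.const 0)).partrec)
  have hdiag : φ (encode c) = Part.some (bif decide (C (encode c)) then 1 else 0) := by
    simp [φ, hc]
  by_cases h : C (encode c)
  · exact hA (encode c) (by simp [hdiag, h]) h
  · exact h (hB (encode c) (by simp [hdiag, h]))

end Inseparable

/-! ### Computable rational arithmetic -/

section Nth

theorem computable_count {S : ℕ → Prop} [DecidablePred S] (hS : ComputablePred S) :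
    Computable (Nat.count S) := by
  have hstep : Computable fun x : ℕ × ℕ × ℕ => x.2.2 + bif decide (S x.2.1) then 1 else 0 :=
    Primrec.nat_add.to_comp.comp (Computable.snd.comp Computable.snd)
      (Computable.cond (hS.decide.comp (Computable.fst.comp Computable.snd))
        (Computable.const 1) (Computable.const 0))
  refine (Computable.nat_rec (f := fun n : ℕ => n) (g := fun _ => 0)
    (h := fun _ x => x.2 + bif decide (S x.1) then 1 else 0)
    Computable.id (Computable.const 0) hstep).of_eq fun n => ?_
  induction n with
  | zero => simp
  | succ n ih => rw [Nat.count_succ, ← ih, ← Bool.cond_decide]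

theorem computable_nth {S : ℕ → Prop} (hS : ComputablePred S) (hinf : {m | S m}.Infinite) :
    Computable (Nat.nth S) := by
  classical
  have hnth (k : ℕ) : S (Nat.nth S k) ∧ Nat.count S (Nat.nth S k) = k :=
    ⟨Nat.nth_mem_of_infinite hinf k, Nat.count_nth_of_infinite hinf k⟩
  have hcount : ComputablePred fun x : ℕ × ℕ => S x.2 ∧ Nat.count S x.2 = x.1 :=
    computablePred_and (computablePred_comp hS Computable.snd)
      (computablePred_eq ((computable_count hS).comp Computable.snd) Computable.fst)
  refine (Computable.find (P := fun k m => S m ∧ Nat.count S m = k) hcount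
    fun k => ⟨_, hnth k⟩).of_eq fun k => ?_
  obtain ⟨hmem, hk⟩ := Nat.find_spec (p := fun m => S m ∧ Nat.count S m = k) ⟨_, hnth k⟩
  exact Nat.count_injective hmem (hnth k).1 (hk.trans (hnth k).2.symm)

variable (α : Type*) [Encodable α] [Infinite α]

/-- `Denumerable.ofEncodableOfInfinite` codes an element by the rank of its original code. -/
theorem encode_ofNat_ofEncodableOfInfinite (k : ℕ) :
    encode (@ofNat α (ofEncodableOfInfinite α) k) = Nat.nth (· ∈ range (encode : α → ℕ)) k := by
  classical
  let _ : DecidablePred (· ∈ range (encode : α → ℕ)) := decidableRangeEncode α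
  have hinf : Infinite (range (encode : α → ℕ)) :=
    Infinite.of_injective _ (Equiv.ofInjective _ encode_injective).injective
  have hval (k : ℕ) : encode (@ofNat α (ofEncodableOfInfinite α) k) =
      Nat.Subtype.ofNat (range (encode : α → ℕ)) k :=
    congrArg Subtype.val ((equivRangeEncode α).apply_symm_apply _)
  have hmono : StrictMono fun k => encode (@ofNat α (ofEncodableOfInfinite α) k) := by
    refine strictMono_nat_of_lt_succ fun k => ?_
    simp only [hval]
    exact Nat.Subtype.lt_succ_self _
  have hinf' : {m | m ∈ range (encode : α → ℕ)}.Infinite := Set.infinite_coe_iff.1 hinf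
  have hnth := Nat.nth_comp_of_strictMono (p := (· ∈ range (encode : α → ℕ))) (n := k) hmono
    (fun m hm => by
      obtain ⟨a, rfl⟩ := hm
      exact ⟨@encode α (ofEncodableOfInfinite α).toEncodable a,
        congrArg encode (@ofNat_encode α (ofEncodableOfInfinite α) a)⟩)
    fun hfin => absurd hfin hinf'
  simpa [Nat.nth_true] using hnth

end Nth

section Rat

theorem encode_rat (q : ℚ) :
    @encode ℚ Rat.instEncodable q = Nat.pair (Equiv.intEquivNat q.num) q.den :=
  rfl

theorem intEquivNat_natAbs (z : ℤ) : (Equiv.intEquivNat z + 1) / 2 = z.natAbs := by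
  cases z with
  | ofNat k => change (2 * k + 1) / 2 = k; omega
  | negSucc k => change (2 * k + 1 + 1) / 2 = k + 1; omega

theorem intEquivNat_toNat (z : ℤ) :
    Equiv.intEquivNat z / 2 * ((Equiv.intEquivNat z + 1) % 2) = z.toNat := by
  cases z with
  | ofNat k =>
    change 2 * k / 2 * ((2 * k + 1) % 2) = k
    rw [show (2 * k + 1) % 2 = 1 by omega]; omega
  | negSucc k =>
    change (2 * k + 1) / 2 * ((2 * k + 1 + 1) % 2) = 0
    rw [show (2 * k + 1 + 1) % 2 = 0 by omega]; omega

theorem mem_range_encode_rat_iff (m : ℕ) : m ∈ range (@encode ℚ Rat.instEncodable) ↔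
    m.unpair.2 ≠ 0 ∧ ∀ d < m.unpair.2 + 1,
      ¬ ((m.unpair.1 + 1) / 2 % d = 0 ∧ m.unpair.2 % d = 0 ∧ d ≠ 1) := by
  simp only [← Nat.dvd_iff_mod_eq_zero]
  constructor
  · rintro ⟨q, rfl⟩
    simp only [encode_rat, Nat.unpair_pair, intEquivNat_natAbs]
    refine ⟨q.den_nz, fun d _ ⟨hnum, hden, hd⟩ => hd ?_⟩
    exact Nat.eq_one_of_dvd_coprimes q.reduced hnum hden
  · rintro ⟨hden, hcop⟩
    obtain ⟨z, hz⟩ := Equiv.intEquivNat.surjective m.unpair.1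
    rw [← hz, intEquivNat_natAbs] at hcop
    have hreduced : z.natAbs.Coprime m.unpair.2 := by
      by_contra hgcd
      exact hcop _ (Nat.lt_succ_of_le (Nat.gcd_le_right _ (Nat.pos_of_ne_zero hden)))
        ⟨Nat.gcd_dvd_left _ _, Nat.gcd_dvd_right _ _, hgcd⟩
    exact ⟨⟨z, m.unpair.2, hden, hreduced⟩, by simp [encode_rat, hz]⟩

theorem computablePred_mem_range_encode_rat :
    ComputablePred (· ∈ range (@encode ℚ Rat.instEncodable)) := by
  have hnum : Primrec fun x : ℕ × ℕ => (x.2.unpair.1 + 1) / 2 :=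
    Primrec.nat_div.comp (Primrec.succ.comp (Primrec.fst.comp (Primrec.unpair.comp Primrec.snd)))
      (Primrec.const 2)
  have hden : Primrec fun m : ℕ => m.unpair.2 := Primrec.snd.comp Primrec.unpair
  have hcommon : PrimrecRel fun d m : ℕ =>
      ¬ ((m.unpair.1 + 1) / 2 % d = 0 ∧ m.unpair.2 % d = 0 ∧ d ≠ 1) :=
    PrimrecPred.not <| PrimrecPred.and
      (Primrec.eq.comp (Primrec.nat_mod.comp hnum Primrec.fst) (Primrec.const 0)) <|
      PrimrecPred.and (Primrec.eq.comp (Primrec.nat_mod.comp (hden.comp Primrec.snd) Primrec.fst)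
        (Primrec.const 0)) (PrimrecPred.not (Primrec.eq.comp Primrec.fst (Primrec.const 1)))
  refine (PrimrecPred.and (PrimrecPred.not (Primrec.eq.comp hden (Primrec.const 0)))
    (hcommon.forall_lt.comp (Primrec.succ.comp hden) Primrec.id)).computablePred.of_eq
      fun m => (mem_range_encode_rat_iff m).symm

theorem computable_encode_rat : Computable fun q : ℚ => @encode ℚ Rat.instEncodable q := by
  have hinf : {m | m ∈ range (@encode ℚ Rat.instEncodable)}.Infinite :=
    Set.infinite_range_of_injective (@encode_injective ℚ Rat.instEncodable)
  refine ((computable_nth computablePred_mem_range_encode_rat hinf).comp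
    Computable.encode).of_eq fun q => ?_
  rw [← encode_ofNat_ofEncodableOfInfinite ℚ]
  exact congrArg _ (@ofNat_encode ℚ Rat.instDenumerable q)

theorem computable_den : Computable Rat.den :=
  (Computable.snd.comp (Primrec.unpair.to_comp.comp computable_encode_rat)).of_eq
    fun q => by simp [encode_rat]

theorem computable_num_code : Computable fun q : ℚ => Equiv.intEquivNat q.num :=
  (Computable.fst.comp (Primrec.unpair.to_comp.comp computable_encode_rat)).of_eq
    fun q => by simp [encode_rat]

theorem computable_num_natAbs : Computable fun q : ℚ => q.num.natAbs :=
  ((Primrec.nat_div.comp Primrec.succ (Primrec.const 2)).to_comp.comp computable_num_code).of_eq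
    fun q => intEquivNat_natAbs q.num

theorem computable_num_toNat : Computable fun q : ℚ => q.num.toNat :=
  ((Primrec.nat_mul.comp (Primrec.nat_div.comp Primrec.id (Primrec.const 2))
    (Primrec.nat_mod.comp Primrec.succ (Primrec.const 2))).to_comp.comp computable_num_code).of_eq
      fun q => intEquivNat_toNat q.num

theorem computable_neg_num_toNat : Computable fun q : ℚ => (-q.num).toNat :=
  (Primrec.nat_sub.to_comp.comp computable_num_natAbs computable_num_toNat).of_eq
    fun q => by omega

theorem rat_eq_toNat_sub_toNat_div_den (q : ℚ) :
    q = ((q.num.toNat : ℚ) - ((-q.num).toNat : ℚ)) / q.den := by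
  have hnum : (q.num : ℚ) = (q.num.toNat : ℚ) - ((-q.num).toNat : ℚ) := by
    exact_mod_cast (Int.toNat_sub_toNat_neg q.num).symm
  rw [← hnum, Rat.num_div_den]

theorem rat_eq_nat_ratio_iff {q : ℚ} {a b c : ℕ} (hc : c ≠ 0) : q = ((a : ℚ) - b) / c ↔
    q.num.toNat * c + b * q.den = a * q.den + (-q.num).toNat * c := by
  have hcℚ : (c : ℚ) ≠ 0 := Nat.cast_ne_zero.2 hc
  have hden : (q.den : ℚ) ≠ 0 := Nat.cast_ne_zero.2 q.den_nz
  conv_lhs => rw [rat_eq_toNat_sub_toNat_div_den q, div_eq_div_iff hden hcℚ]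
  rw [← Nat.cast_inj (R := ℚ)]
  push_cast
  constructor <;> intro h <;> linarith

variable {α : Type*} [Primcodable α]

/-- Searches for the rational number with the given value. -/
theorem computable_nat_ratio {a b c : α → ℕ} (ha : Computable a) (hb : Computable b)
    (hc : Computable c) (hc0 : ∀ x, c x ≠ 0) :
    Computable fun x => ((a x : ℚ) - b x) / c x := by
  let value (x : α) : ℚ := ((a x : ℚ) - b x) / c x
  have hofNat : Computable fun x : α × ℕ => ofNat ℚ x.2 :=
    (Computable.ofNat ℚ).comp Computable.snd
  have hsearch : ComputablePred fun x : α × ℕ => ofNat ℚ x.2 = value x.1 := by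
    refine (computablePred_eq (Primrec.nat_add.to_comp.comp
      (Primrec.nat_mul.to_comp.comp (computable_num_toNat.comp hofNat) (hc.comp Computable.fst))
      (Primrec.nat_mul.to_comp.comp (hb.comp Computable.fst) (computable_den.comp hofNat)))
      (Primrec.nat_add.to_comp.comp
        (Primrec.nat_mul.to_comp.comp (ha.comp Computable.fst) (computable_den.comp hofNat))
        (Primrec.nat_mul.to_comp.comp (computable_neg_num_toNat.comp hofNat)
          (hc.comp Computable.fst)))).of_eq fun x => (rat_eq_nat_ratio_iff (hc0 x.1)).symm
  have hex (x : α) : ∃ k, ofNat ℚ k = value x := ⟨_, ofNat_encode (value x)⟩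
  exact ((Computable.ofNat ℚ).comp
    (Computable.find (P := fun x k => ofNat ℚ k = value x) hsearch hex)).of_eq
      fun x => Nat.find_spec (hex x)

theorem computable_rat_neg {f : α → ℚ} (hf : Computable f) : Computable fun x => -f x := by
  refine (computable_nat_ratio (computable_neg_num_toNat.comp hf) (computable_num_toNat.comp hf)
    (computable_den.comp hf) fun x => (f x).den_nz).of_eq fun x => ?_
  conv_rhs => rw [rat_eq_toNat_sub_toNat_div_den (f x)]
  ring

theorem computable_rat_abs {f : α → ℚ} (hf : Computable f) : Computable fun x => |f x| := by
  refine (computable_nat_ratio (computable_num_natAbs.comp hf) (Computable.const 0)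
    (computable_den.comp hf) fun x => (f x).den_nz).of_eq fun x => ?_
  rw [Nat.cast_zero, sub_zero, Nat.cast_natAbs, Int.cast_abs]
  conv_rhs => rw [← Rat.num_div_den (f x), abs_div, Nat.abs_cast]

theorem computable_rat_add {f g : α → ℚ} (hf : Computable f) (hg : Computable g) :
    Computable fun x => f x + g x := by
  have hmul {a b : α → ℕ} (ha : Computable a) (hb : Computable b) : Computable fun x => a x * b x :=
    Primrec.nat_mul.to_comp.comp ha hb
  have hadd {a b : α → ℕ} (ha : Computable a) (hb : Computable b) : Computable fun x => a x + b x :=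
    Primrec.nat_add.to_comp.comp ha hb
  have hfden := computable_den.comp hf
  have hgden := computable_den.comp hg
  refine (computable_nat_ratio
    (hadd (hmul (computable_num_toNat.comp hf) hgden) (hmul (computable_num_toNat.comp hg) hfden))
    (hadd (hmul (computable_neg_num_toNat.comp hf) hgden)
      (hmul (computable_neg_num_toNat.comp hg) hfden))
    (hmul hfden hgden) fun x => mul_ne_zero (f x).den_nz (g x).den_nz).of_eq fun x => ?_
  have hfx : ((f x).den : ℚ) ≠ 0 := Nat.cast_ne_zero.2 (f x).den_nz
  have hgx : ((g x).den : ℚ) ≠ 0 := Nat.cast_ne_zero.2 (g x).den_nz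
  conv_rhs => rw [rat_eq_toNat_sub_toNat_div_den (f x), rat_eq_toNat_sub_toNat_div_den (g x),
    div_add_div _ _ hfx hgx]
  push_cast
  ring

theorem computable_rat_sub {f g : α → ℚ} (hf : Computable f) (hg : Computable g) :
    Computable fun x => f x - g x := by
  simpa only [sub_eq_add_neg] using computable_rat_add hf (computable_rat_neg hg)

theorem computablePred_rat_lt {f g : α → ℚ} (hf : Computable f) (hg : Computable g) :
    ComputablePred fun x => f x < g x := by
  refine (computablePred_nat_le (computable_num_toNat.comp (computable_rat_sub hg hf))
    (Computable.const 0)).not.of_eq fun x => ?_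
  rw [← sub_pos, ← Rat.num_pos]
  omega

theorem computable_nat_mul_half_pow {k m : α → ℕ} (hk : Computable k) (hm : Computable m) :
    Computable fun x => (k x : ℚ) * (1 / 2) ^ m x := by
  have hpow : Computable fun x => 2 ^ m x :=
    (Primrec.nat_iff.2 Nat.Primrec.pow).to_comp.comp
      (Primrec₂.natPair.to_comp.comp (Computable.const 2) hm) |>.of_eq fun x => by simp
  exact (computable_nat_ratio hk (Computable.const 0) hpow
    fun x => by positivity).of_eq fun x => by simp [div_eq_mul_inv]

theorem computable_half_pow {m : α → ℕ} (hm : Computable m) :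
    Computable fun x => (1 / 2 : ℚ) ^ m x :=
  (computable_nat_mul_half_pow (Computable.const 1) hm).of_eq fun x => by
    rw [Nat.cast_one, one_mul]

end Rat

/-! ### Lower semicomputable functions -/

section LowerSemicomputable

variable {α β : Type*} [Primcodable α] [Primcodable β]

/-- A real-valued function is lower semicomputable if the rationals below its values are
uniformly computably enumerable. -/
def LowerSemicomputable (f : α → ℝ) : Prop :=
  REPred fun x : α × ℚ => (x.2 : ℝ) < f x.1

theorem lowerSemicomputable_ratCast {f : α → ℚ} (hf : Computable f) :
    LowerSemicomputable fun a => (f a : ℝ) :=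
  (computablePred_rat_lt Computable.snd (hf.comp Computable.fst)).to_re.of_eq
    fun _ => (Rat.cast_lt (K := ℝ)).symm

namespace LowerSemicomputable

variable {f g : α → ℝ}

theorem comp {f : β → ℝ} (hf : LowerSemicomputable f) {e : α → β} (he : Computable e) :
    LowerSemicomputable fun a => f (e a) :=
  rePred_comp hf ((he.comp Computable.fst).pair Computable.snd)

theorem min (hf : LowerSemicomputable f) (hg : LowerSemicomputable g) :
    LowerSemicomputable fun a => min (f a) (g a) :=
  (rePred_and hf hg).of_eq fun _ => lt_min_iff.symm

theorem ratCast_add {u : α → ℚ} (hu : Computable u) (hf : LowerSemicomputable f) :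
    LowerSemicomputable fun a => u a + f a := by
  have hshift : Computable fun x : α × ℚ => (x.1, x.2 - u x.1) :=
    Computable.fst.pair (computable_rat_sub Computable.snd (hu.comp Computable.fst))
  refine (rePred_comp hf hshift).of_eq fun x => ?_
  rw [Rat.cast_sub, sub_lt_iff_lt_add']

theorem ite {p : α → Prop} [DecidablePred p] (hp : REPred p) (hf : LowerSemicomputable f)
    (hg : LowerSemicomputable g) (hfg : ∀ a, f a ≤ g a) :
    LowerSemicomputable fun a => if p a then g a else f a := by
  refine (rePred_or hf (rePred_and (rePred_comp hp Computable.fst) hg)).of_eq fun x => ?_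
  by_cases h : p x.1
  · simp only [h, true_and, if_true, or_iff_right_iff_imp]
    exact fun hlt => hlt.trans_le (hfg x.1)
  · simp [h]

end LowerSemicomputable

end LowerSemicomputable

section SwitchValue

/-- For an increasing sequence of stages `R`, the value `2⁻ᵏ⁻ᵐ` if `R` becomes true right after
stage `k`, and `0` if `R` stays false. -/
noncomputable def switchValue (R : ℕ → Prop) (m : ℕ) : ℝ :=
  open Classical in if h : ∃ k, R (k + 1) ∧ ¬ R k then (1 / 2) ^ (h.choose + m) else 0

variable {R : ℕ → Prop} {m k : ℕ}

theorem exists_succ_and_not (h0 : ¬ R 0) (hR : ∃ k, R k) : ∃ k, R (k + 1) ∧ ¬ R k := by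
  by_contra! hstep
  obtain ⟨k, hk⟩ := hR
  induction k with
  | zero => exact h0 hk
  | succ k ih => exact ih (hstep k hk)

theorem switchValue_nonneg : 0 ≤ switchValue R m := by
  unfold switchValue
  split_ifs <;> positivity

theorem switchValue_le_of_not (hmono : Monotone R) (hk : ¬ R k) :
    switchValue R m ≤ (1 / 2) ^ (k + m) := by
  unfold switchValue
  split_ifs with h
  · have hlt : k < h.choose + 1 := lt_of_not_ge fun hle => hk (hmono hle h.choose_spec.1)
    exact pow_le_pow_of_le_one (by norm_num) (by norm_num) (by omega)
  · positivity

theorem switchValue_eq (hmono : Monotone R) (hk : R (k + 1)) (hk' : ¬ R k) :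
    switchValue R m = (1 / 2) ^ (k + m) := by
  have h : ∃ k, R (k + 1) ∧ ¬ R k := ⟨k, hk, hk'⟩
  have hlt : k < h.choose + 1 := lt_of_not_ge fun hle => hk' (hmono hle h.choose_spec.1)
  have hgt : h.choose < k + 1 := lt_of_not_ge fun hle => h.choose_spec.2 (hmono hle hk)
  rw [switchValue, dif_pos h, show h.choose = k by omega]

theorem switchValue_pos_iff (h0 : ¬ R 0) : 0 < switchValue R m ↔ ∃ k, R k := by
  unfold switchValue
  split_ifs with h
  · exact iff_of_true (by positivity) ⟨_, h.choose_spec.1⟩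
  · exact iff_of_false (lt_irrefl 0) fun hR => h (exists_succ_and_not h0 hR)

theorem lt_switchValue_iff (hmono : Monotone R) (h0 : ¬ R 0) {q : ℝ} :
    q < switchValue R m ↔ q < 0 ∨ ∃ k, (R (k + 1) ∧ ¬ R k) ∧ q < (1 / 2) ^ (k + m) := by
  constructor
  · intro hq
    by_cases hR : ∃ k, R k
    · obtain ⟨k, hk, hk'⟩ := exists_succ_and_not h0 hR
      exact Or.inr ⟨k, ⟨hk, hk'⟩, switchValue_eq hmono hk hk' ▸ hq⟩
    · exact Or.inl (hq.trans_le (not_lt.1 ((switchValue_pos_iff h0).not.2 hR)))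
  · rintro (hq | ⟨k, ⟨hk, hk'⟩, hq⟩)
    · exact hq.trans_le switchValue_nonneg
    · rwa [switchValue_eq hmono hk hk']

theorem lt_neg_switchValue_iff (hmono : Monotone R) (h0 : ¬ R 0) {q : ℝ} :
    q < -switchValue R m ↔ ∃ k, ¬ R k ∧ q < -(1 / 2) ^ (k + m) := by
  constructor
  · intro hq
    by_cases hR : ∃ k, R k
    · obtain ⟨k, hk, hk'⟩ := exists_succ_and_not h0 hR
      exact ⟨k, hk', switchValue_eq hmono hk hk' ▸ hq⟩
    · have hneg : 0 < -q := by linarith [switchValue_nonneg (R := R) (m := m)]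
      obtain ⟨k, hk⟩ := exists_pow_lt_of_lt_one hneg (show (1 / 2 : ℝ) < 1 by norm_num)
      have hle : (1 / 2 : ℝ) ^ (k + m) ≤ (1 / 2) ^ k :=
        pow_le_pow_of_le_one (by norm_num) (by norm_num) (by omega)
      exact ⟨k, fun h => hR ⟨k, h⟩, by linarith⟩
  · rintro ⟨k, hk, hq⟩
    linarith [switchValue_le_of_not (m := m) hmono hk]

variable {α : Type*} [Primcodable α]

theorem exists_computable_real_pos_iff {p : α → Prop} (hp : REPred p) {m : α → ℕ}
    (hm : Computable m) :
    ∃ ε : α → ℝ, LowerSemicomputable ε ∧ LowerSemicomputable (fun a => -ε a) ∧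
      (∀ a, ε a ∈ Icc 0 ((1 / 2) ^ m a)) ∧ ∀ a, 0 < ε a ↔ p a := by
  obtain ⟨R, hR, hmono, h0, hpR⟩ := exists_computable_stages hp
  have hpow : Computable fun x : (α × ℚ) × ℕ => (1 / 2 : ℚ) ^ (x.2 + m x.1.1) :=
    computable_half_pow (Primrec.nat_add.to_comp.comp Computable.snd
      (hm.comp (Computable.fst.comp Computable.fst)))
  have hrat : Computable fun x : (α × ℚ) × ℕ => x.1.2 := Computable.snd.comp Computable.fst
  have hstage : Computable fun x : (α × ℚ) × ℕ => (x.1.1, x.2) :=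
    (Computable.fst.comp Computable.fst).pair Computable.snd
  have hstage' : Computable fun x : (α × ℚ) × ℕ => (x.1.1, x.2 + 1) :=
    (Computable.fst.comp Computable.fst).pair (Computable.succ.comp Computable.snd)
  refine ⟨fun a => switchValue (R a) (m a), ?_, ?_, fun a => ⟨switchValue_nonneg, ?_⟩, fun a => ?_⟩
  · refine (rePred_or (computablePred_rat_lt Computable.snd (Computable.const 0)).to_re
      (rePred_exists_of_computablePred (computablePred_and
        (computablePred_and (computablePred_comp hR hstage') (computablePred_comp hR hstage).not)
        (computablePred_rat_lt hrat hpow)))).of_eq fun x => ?_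
    simp only [lt_switchValue_iff (hmono x.1) (h0 x.1), ← Rat.cast_lt (K := ℝ)]
    push_cast
    rfl
  · refine (rePred_exists_of_computablePred (computablePred_and (computablePred_comp hR hstage).not
      (computablePred_rat_lt hrat (computable_rat_neg hpow)))).of_eq fun x => ?_
    simp only [lt_neg_switchValue_iff (hmono x.1) (h0 x.1), ← Rat.cast_lt (K := ℝ)]
    push_cast
    rfl
  · simpa using switchValue_le_of_not (m := m a) (hmono a) (h0 a)
  · rw [switchValue_pos_iff (h0 a), hpR]

end SwitchValue

/-! ### Effectively closed subsets of the plane -/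

section Pi01

theorem isPi01Closed_iff {F : Set (ℝ × ℝ)} : IsPi01Closed F ↔
    ∃ W : (ℚ × ℚ) × ℚ → Prop, REPred W ∧ ∀ p, p ∉ F ↔ ∃ c, W c ∧ p ∈ ballOfCode c := by
  refine exists_congr fun W => and_congr_right fun _ => ?_
  rw [Set.ext_iff]
  refine forall_congr' fun p => ?_
  have hmem : p ∈ univ \ ⋃ c ∈ {c | W c}, ballOfCode c ↔ ¬ ∃ c, W c ∧ p ∈ ballOfCode c := by simp
  rw [hmem, not_iff_comm]
  exact iff_comm

theorem IsPi01Closed.inter {F G : Set (ℝ × ℝ)} (hF : IsPi01Closed F) (hG : IsPi01Closed G) :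
    IsPi01Closed (F ∩ G) := by
  obtain ⟨V, hV, hVF⟩ := isPi01Closed_iff.1 hF
  obtain ⟨W, hW, hWG⟩ := isPi01Closed_iff.1 hG
  refine isPi01Closed_iff.2 ⟨_, rePred_or hV hW, fun p => ?_⟩
  simp only [mem_inter_iff, not_and_or, hVF, hWG, or_and_right, exists_or]

theorem ratCast_mem_ballOfCode_iff (q : ℚ × ℚ) (c : (ℚ × ℚ) × ℚ) :
    ((q.1 : ℝ), (q.2 : ℝ)) ∈ ballOfCode c ↔ |q.1 - c.1.1| < c.2 ∧ |q.2 - c.1.2| < c.2 := by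
  simp only [ballOfCode, mem_ofPred_eq, Prod.dist_eq, max_lt_iff, Real.dist_eq]
  exact_mod_cast Iff.rfl

theorem IsPi01Closed.rePred_notMem {α : Type*} [Primcodable α] {F : Set (ℝ × ℝ)}
    (hF : IsPi01Closed F) {q : α → ℚ × ℚ} (hq : Computable q) :
    REPred fun a => (((q a).1 : ℝ), ((q a).2 : ℝ)) ∉ F := by
  obtain ⟨W, hW, hWF⟩ := isPi01Closed_iff.1 hF
  have hq' : Computable fun x : α × (ℚ × ℚ) × ℚ => q x.1 := hq.comp Computable.fst
  have hcenter : Computable fun x : α × (ℚ × ℚ) × ℚ => x.2.1 := Computable.fst.comp Computable.snd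
  have hradius : Computable fun x : α × (ℚ × ℚ) × ℚ => x.2.2 := Computable.snd.comp Computable.snd
  have hball : ComputablePred fun x : α × (ℚ × ℚ) × ℚ =>
      |(q x.1).1 - x.2.1.1| < x.2.2 ∧ |(q x.1).2 - x.2.1.2| < x.2.2 :=
    computablePred_and
      (computablePred_rat_lt (computable_rat_abs (computable_rat_sub (Computable.fst.comp hq')
        (Computable.fst.comp hcenter))) hradius)
      (computablePred_rat_lt (computable_rat_abs (computable_rat_sub (Computable.snd.comp hq')
        (Computable.snd.comp hcenter))) hradius)
  refine (rePred_exists (rePred_and (rePred_comp hW Computable.snd) hball.to_re)).of_eq fun a => ?_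
  simp only [hWF, ratCast_mem_ballOfCode_iff]

variable {ι : Type*} [Denumerable ι]

/-- A sequence of functions on the plane whose superlevel sets are uniformly effectively open:
nonexpansive for the sup metric, and lower semicomputable at rational points. -/
structure EffectivelyShort (f : ι → ℝ × ℝ → ℝ) : Prop where
  lipschitz : ∀ i, LipschitzWith 1 (f i)
  lowerSemicomputable :
    LowerSemicomputable fun x : ι × (ℚ × ℚ) => f x.1 ((x.2.1 : ℝ), (x.2.2 : ℝ))

/-- The points with `f i p > 0` are covered by the rational balls whose radius is less than the
value of `f i` at the centre. -/
theorem EffectivelyShort.isPi01Closed {f : ι → ℝ × ℝ → ℝ} (hf : EffectivelyShort f) :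
    IsPi01Closed {p | ∀ i, f i p ≤ 0} := by
  refine isPi01Closed_iff.2 ⟨fun c => ∃ i, (c.2 : ℝ) < f i ((c.1.1 : ℝ), (c.1.2 : ℝ)), ?_,
    fun p => ?_⟩
  · exact rePred_exists (rePred_comp hf.lowerSemicomputable
      ((Computable.snd.pair (Computable.fst.comp Computable.fst)).pair
        (Computable.snd.comp Computable.fst)))
  have hshort (i : ι) (q : ℝ × ℝ) : |f i p - f i q| ≤ dist p q := by
    simpa [Real.dist_eq] using (hf.lipschitz i).dist_le_mul p q
  simp only [mem_ofPred_eq, not_forall, not_le]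
  constructor
  · rintro ⟨i, hi⟩
    obtain ⟨r, hr0, hr⟩ := exists_rat_btwn (half_pos hi)
    have hdense : DenseRange (Prod.map ((↑) : ℚ → ℝ) ((↑) : ℚ → ℝ)) :=
      Rat.denseRange_cast.prodMap Rat.denseRange_cast
    obtain ⟨q, hq⟩ := hdense.exists_dist_lt p hr0
    refine ⟨(q, r), ⟨i, ?_⟩, hq⟩
    have := abs_le.1 (hshort i (Prod.map (↑) (↑) q))
    change (r : ℝ) < f i (Prod.map (↑) (↑) q)
    linarith
  · rintro ⟨c, ⟨i, hi⟩, hp⟩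
    have hlt : dist p ((c.1.1 : ℝ), (c.1.2 : ℝ)) < c.2 := hp
    exact ⟨i, by linarith [abs_le.1 (hshort i ((c.1.1 : ℝ), (c.1.2 : ℝ)))]⟩

theorem EffectivelyShort.min {f g : ι → ℝ × ℝ → ℝ} (hf : EffectivelyShort f)
    (hg : EffectivelyShort g) : EffectivelyShort fun i p => min (f i p) (g i p) where
  lipschitz i := by simpa using (hf.lipschitz i).min (hg.lipschitz i)
  lowerSemicomputable := hf.lowerSemicomputable.min hg.lowerSemicomputable

theorem effectivelyShort_add {u : ι → ℝ × ℝ → ℝ} (hu : ∀ i, LipschitzWith 1 (u i))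
    {v : ι × ℚ × ℚ → ℚ} (hv : Computable v) (huv : ∀ i (q₁ q₂ : ℚ), u i (q₁, q₂) = v (i, q₁, q₂))
    {e : ι → ℝ} (he : LowerSemicomputable e) : EffectivelyShort fun i p => u i p + e i where
  lipschitz i := by simpa using (hu i).add (LipschitzWith.const (e i))
  lowerSemicomputable := by
    simpa only [huv] using (he.comp Computable.fst).ratCast_add hv

section Coordinates

theorem lipschitzWith_abs_fst_sub (c : ℝ) : LipschitzWith 1 fun p : ℝ × ℝ => |p.1 - c| :=
  mul_one (1 : NNReal) ▸ (LipschitzWith.dist_left c).comp LipschitzWith.prod_fst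

variable {e : ι → ℝ} (he : LowerSemicomputable e)
include he

theorem effectivelyShort_fst_add : EffectivelyShort fun i p => p.1 + e i :=
  effectivelyShort_add (fun _ => LipschitzWith.prod_fst)
    (Computable.fst.comp Computable.snd) (fun _ _ _ => rfl) he

theorem effectivelyShort_neg_fst_add : EffectivelyShort fun i p => -p.1 + e i :=
  effectivelyShort_add (fun _ => LipschitzWith.prod_fst.neg)
    (computable_rat_neg (Computable.fst.comp Computable.snd))
    (fun _ _ _ => (Rat.cast_neg _).symm) he

theorem effectivelyShort_snd_add : EffectivelyShort fun i p => p.2 + e i :=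
  effectivelyShort_add (fun _ => LipschitzWith.prod_snd)
    (Computable.snd.comp Computable.snd) (fun _ _ _ => rfl) he

theorem effectivelyShort_neg_snd_add : EffectivelyShort fun i p => -p.2 + e i :=
  effectivelyShort_add (fun _ => LipschitzWith.prod_snd.neg)
    (computable_rat_neg (Computable.snd.comp Computable.snd))
    (fun _ _ _ => (Rat.cast_neg _).symm) he

variable {c : ι → ℚ} (hc : Computable c)
include hc

theorem effectivelyShort_abs_fst_sub_add : EffectivelyShort fun i p => |p.1 - c i| + e i :=
  effectivelyShort_add (fun i => lipschitzWith_abs_fst_sub (c i))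
    (computable_rat_abs (computable_rat_sub (Computable.fst.comp Computable.snd)
      (hc.comp Computable.fst))) (fun _ _ _ => by push_cast; rfl) he

theorem effectivelyShort_neg_abs_fst_sub_add : EffectivelyShort fun i p => -|p.1 - c i| + e i :=
  effectivelyShort_add (fun i => (lipschitzWith_abs_fst_sub (c i)).neg)
    (computable_rat_neg (computable_rat_abs (computable_rat_sub
      (Computable.fst.comp Computable.snd) (hc.comp Computable.fst))))
    (fun _ _ _ => by push_cast; rfl) he

end Coordinates

end Pi01

/-! ### Dendrites in the plane -/

section Circle

theorem one_lt_rank_euclideanPlane : 1 < Module.rank ℝ (EuclideanSpace ℝ (Fin 2)) := by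
  rw [← Module.finrank_eq_rank]
  simp

theorem preconnectedSpace_unitCircle : PreconnectedSpace unitCircle :=
  Subtype.preconnectedSpace
    (isPreconnected_sphere one_lt_rank_euclideanPlane 0 1)

theorem isPreconnected_compl_singleton_unitCircle (v : unitCircle) :
    IsPreconnected ({v}ᶜ : Set unitCircle) := by
  have hv : ‖(v : EuclideanSpace ℝ (Fin 2))‖ = 1 := mem_sphere_zero_iff_norm.1 v.2
  have himage := (stereographic hv).symm_image_target_eq_source
  have hcont := (stereographic hv).continuousOn_symm
  rw [stereographic_target] at himage hcont
  rw [stereographic_source] at himage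
  exact himage ▸ isPreconnected_univ.image _ hcont

theorem nontrivial_unitCircle : Nontrivial unitCircle := by
  have hne : (!₂[1, 0] : EuclideanSpace ℝ (Fin 2)) ≠ !₂[0, 1] := fun h => by
    simpa using congrArg (· 0) h
  exact ⟨⟨!₂[1, 0], by simp [unitCircle, EuclideanSpace.norm_eq]⟩,
    ⟨!₂[0, 1], by simp [unitCircle, EuclideanSpace.norm_eq]⟩, fun h => hne (congrArg Subtype.val h)⟩

/-- Removing the only point on the level set would disconnect the circle. -/
theorem not_lt_and_lt_of_homeomorph_unitCircle {X : Type*} [TopologicalSpace X]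
    (φ : X ≃ₜ unitCircle) {f : X → ℝ} (hf : Continuous f) {c : ℝ}
    (hlevel : (f ⁻¹' {c}).Subsingleton) {x y : X} (hx : f x < c) (hy : c < f y) : False := by
  have := preconnectedSpace_unitCircle
  have : PreconnectedSpace X := φ.symm.surjective.denseRange.preconnectedSpace φ.symm.continuous
  obtain ⟨z, hz⟩ := intermediate_value_univ x y hf ⟨hx.le, hy.le⟩
  have hcompl : IsPreconnected ({z}ᶜ : Set X) := by
    have := (isPreconnected_compl_singleton_unitCircle (φ z)).image φ.symm
      φ.symm.continuous.continuousOn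
    rwa [φ.symm.image_compl, image_singleton, φ.symm_apply_apply] at this
  have hxz : x ∈ ({z}ᶜ : Set X) := by rintro rfl; exact hx.ne hz
  have hyz : y ∈ ({z}ᶜ : Set X) := by rintro rfl; exact hy.ne' hz
  obtain ⟨w, hw, hwc⟩ := hcompl.intermediate_value hxz hyz hf.continuousOn ⟨hx.le, hy.le⟩
  exact hw (hlevel hwc hz)

/-- A circle is separated by no generic vertical line that meets it only once, so it lies on a
vertical line; but a line contains no circle for the same reason. -/
theorem isEmpty_homeomorph_unitCircle_of_countable {S : Set (ℝ × ℝ)} {E : Set ℝ}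
    (hE : E.Countable) (hfiber : ∀ p ∈ S, ∀ q ∈ S, p.1 = q.1 → p.1 ∉ E → p = q) :
    IsEmpty (S ≃ₜ unitCircle) := by
  refine ⟨fun φ => ?_⟩
  have fst_le (p q : S) : p.1.1 ≤ q.1.1 := by
    by_contra! hlt
    obtain ⟨c, hc, hcE⟩ := (hE.dense_compl ℝ).inter_open_nonempty _ isOpen_Ioo (nonempty_Ioo.2 hlt)
    refine not_lt_and_lt_of_homeomorph_unitCircle φ
      (continuous_fst.comp continuous_subtype_val) ?_ hc.1 hc.2
    rintro a rfl b hb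
    exact Subtype.ext (hfiber a a.2 b b.2 hb.symm hcE)
  have fst_eq (p q : S) : p.1.1 = q.1.1 := (fst_le p q).antisymm (fst_le q p)
  have snd_le (p q : S) : p.1.2 ≤ q.1.2 := by
    by_contra! hlt
    obtain ⟨c, hqc, hcp⟩ := exists_between hlt
    refine not_lt_and_lt_of_homeomorph_unitCircle φ
      (continuous_snd.comp continuous_subtype_val) ?_ hqc hcp
    rintro a rfl b hb
    exact Subtype.ext (Prod.ext (fst_eq a b) hb.symm)
  obtain ⟨a, b, hab⟩ := nontrivial_unitCircle
  exact hab (φ.symm.injective (Subtype.ext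
    (Prod.ext (fst_eq _ _) ((snd_le _ _).antisymm (snd_le _ _)))))

end Circle

section Path

variable {X : Type*} [TopologicalSpace X] {a b : ℝ} {γ : ℝ → X}

theorem locallyConnectedSpace_Icc (hab : a ≤ b) : LocallyConnectedSpace (Icc a b) := by
  have hproj : IsQuotientMap (projIcc a b hab) :=
    IsQuotientMap.of_inverse continuous_subtype_val continuous_projIcc (projIcc_val hab)
  exact hproj.isCoinducing.locallyConnectedSpace

theorem isContinuum_image_Icc (hab : a ≤ b) (hγ : ContinuousOn γ (Icc a b)) :
    IsContinuum (γ '' Icc a b) :=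
  ⟨isCompact_Icc.image_of_continuousOn hγ, (isConnected_Icc hab).image γ hγ⟩

theorem locallyConnectedSpace_image_Icc [T2Space X] (hab : a ≤ b) (hγ : ContinuousOn γ (Icc a b)) :
    LocallyConnectedSpace (γ '' Icc a b) := by
  have := locallyConnectedSpace_Icc hab
  have hcont : Continuous (imageFactorization γ (Icc a b)) :=
    (continuousOn_iff_continuous_domRestrict.1 hγ).subtype_mk _
  exact (IsQuotientMap.of_surjective_continuous imageFactorization_surjective
    hcont).isCoinducing.locallyConnectedSpace

theorem isDendrite_image_Icc {γ : ℝ → ℝ × ℝ} (hab : a ≤ b) (hγ : ContinuousOn γ (Icc a b))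
    {E : Set ℝ} (hE : E.Countable)
    (hfiber : ∀ p ∈ γ '' Icc a b, ∀ q ∈ γ '' Icc a b, p.1 = q.1 → p.1 ∉ E → p = q) :
    IsDendrite (γ '' Icc a b) :=
  ⟨isContinuum_image_Icc hab hγ, locallyConnectedSpace_image_Icc hab hγ, fun _ hS =>
    isEmpty_homeomorph_unitCircle_of_countable hE
      fun p hp q hq => hfiber p (hS hp) q (hS hq)⟩

end Path

/-! ### Arches -/

/-- The arch of half-width `δ` and height `h` over the tile `[r / 2, r]`: the graph that stays on
the axis up to distance `δ` from the centre of the tile and runs at height `h` in between, with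
both vertical sides included. For `δ = 0` it is the tile with a whisker of length `h` on top of its
centre, and for `h = 0` it is just the tile. -/
def arch (r δ h : ℝ) : Set (ℝ × ℝ) :=
  {p | |p.1 - 3 / 4 * r| ≤ r / 4 ∧ 0 ≤ p.2 ∧ p.2 ≤ h ∧ (0 < p.2 → |p.1 - 3 / 4 * r| ≤ δ) ∧
    (|p.1 - 3 / 4 * r| < δ → p.2 = h)}

/-- The bounds on the half-width `δ` and the height `h` of an arch over a tile of scale `r`. -/
structure ArchShape (r δ h : ℝ) : Prop where
  width_nonneg : 0 ≤ δ
  width_le : δ ≤ r / 8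
  height_nonneg : 0 ≤ h
  height_le : h ≤ r

/-- The horizontal displacement, at distance `s` from the centre of the tile, of the
parametrization of an arch by its tile. -/
noncomputable def archShift (r δ s : ℝ) : ℝ :=
  min 0 (max (δ - s) (2 * s - r / 2)) - min 0 (max (δ + s) (-2 * s - r / 2))

/-- The height, at distance `s` from the centre of the tile, of the parametrization of an arch
by its tile. -/
noncomputable def archHeight (r h s : ℝ) : ℝ := max 0 (min h (4 * r - 24 * |s|))

section Arch

variable {r δ h s : ℝ}

theorem continuous_archShift : Continuous (archShift r δ) := by
  unfold archShift; fun_prop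

theorem continuous_archHeight : Continuous (archHeight r h) := by
  unfold archHeight; fun_prop

theorem archShift_neg : archShift r δ (-s) = -archShift r δ s := by
  unfold archShift; ring_nf

theorem archHeight_neg : archHeight r h (-s) = archHeight r h s := by
  rw [archHeight, archHeight, abs_neg]

theorem abs_archShift_le (hδ : 0 ≤ δ) (hr : 0 ≤ r) : |archShift r δ s| ≤ r := by
  unfold archShift; grind

theorem abs_archHeight_le (hh : h ≤ r) (hr : 0 ≤ r) : |archHeight r h s| ≤ r := by
  unfold archHeight; grind

theorem archShift_eq_zero (hδ : 0 ≤ δ) (hs : r / 4 ≤ |s|) : archShift r δ s = 0 := by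
  unfold archShift; grind

theorem archHeight_eq_zero (hs : r / 4 ≤ |s|) : archHeight r h s = 0 := by
  unfold archHeight; grind

theorem add_archShift (hδ : 0 ≤ δ) (hs : 0 ≤ s) :
    s + archShift r δ s = min s (max δ (3 * s - r / 2)) := by
  unfold archShift; grind

theorem abs_add_archShift (hδ : 0 ≤ δ) :
    |s + archShift r δ s| = min |s| (max δ (3 * |s| - r / 2)) := by
  unfold archShift; grind

theorem ArchShape.mem_arch (H : ArchShape r δ h) (hs : |s| ≤ r / 4) :
    (3 / 4 * r + s + archShift r δ s, archHeight r h s) ∈ arch r δ h := by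
  obtain ⟨hδ, hδr, hh, hhr⟩ := H
  have hz := abs_add_archShift (r := r) (s := s) hδ
  have hx : 3 / 4 * r + s + archShift r δ s - 3 / 4 * r = s + archShift r δ s := by ring
  simp only [arch, mem_ofPred_eq, hx, hz, archHeight]
  grind

theorem ArchShape.exists_of_nonneg (H : ArchShape r δ h) {z y : ℝ} (hz : 0 ≤ z)
    (hp : (3 / 4 * r + z, y) ∈ arch r δ h) :
    ∃ s, |s| ≤ r / 4 ∧ s + archShift r δ s = z ∧ archHeight r h s = y := by
  obtain ⟨hδ, hδr, -, hhr⟩ := H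
  simp only [arch, mem_ofPred_eq, add_sub_cancel_left, abs_of_nonneg hz] at hp
  obtain ⟨hzr, hy0, hyh, hyδ, hzδ⟩ := hp
  suffices ∃ s, 0 ≤ s ∧ s ≤ r / 4 ∧ min s (max δ (3 * s - r / 2)) = z ∧
      max 0 (min h (4 * r - 24 * s)) = y by
    obtain ⟨s, hs, hsr, hsz, hsy⟩ := this
    exact ⟨s, by rwa [abs_of_nonneg hs], by rwa [add_archShift hδ hs],
      by rwa [archHeight, abs_of_nonneg hs]⟩
  rcases lt_or_ge z δ with hlt | hge
  · exact ⟨z, by grind⟩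
  rcases hy0.eq_or_lt with hy | hy
  · exact ⟨(z + r / 2) / 3, by grind⟩
  · exact ⟨(4 * r - y) / 24, by grind⟩

theorem neg_mem_arch {z y : ℝ} (hp : (3 / 4 * r + z, y) ∈ arch r δ h) :
    (3 / 4 * r + -z, y) ∈ arch r δ h := by
  simpa only [arch, mem_ofPred_eq, add_sub_cancel_left, abs_neg] using hp

theorem ArchShape.exists_eq (H : ArchShape r δ h) {p : ℝ × ℝ} (hp : p ∈ arch r δ h) :
    ∃ s, |s| ≤ r / 4 ∧ (3 / 4 * r + s + archShift r δ s, archHeight r h s) = p := by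
  obtain ⟨z, y, rfl⟩ : ∃ z y, p = (3 / 4 * r + z, y) := ⟨p.1 - 3 / 4 * r, p.2, by simp⟩
  suffices ∃ s, |s| ≤ r / 4 ∧ s + archShift r δ s = z ∧ archHeight r h s = y by
    obtain ⟨s, hs, rfl, rfl⟩ := this
    exact ⟨s, hs, by rw [add_assoc]⟩
  rcases le_total 0 z with hz | hz
  · exact H.exists_of_nonneg hz hp
  · obtain ⟨s, hs, hsz, hsy⟩ := H.exists_of_nonneg (neg_nonneg.2 hz) (neg_mem_arch hp)
    exact ⟨-s, by rwa [abs_neg], by rw [archShift_neg]; linarith, by rwa [archHeight_neg]⟩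

end Arch

/-! ### A dendrite made of arches -/

/-- The scale of the `n`-th tile `[r / 2, r]` of the interval `(0, 1]`, where `r = 2⁻ⁿ`. -/
noncomputable def tileScale (n : ℕ) : ℝ := (1 / 2) ^ n

section Tile

variable {m n : ℕ} {x : ℝ}

theorem tileScale_pos (n : ℕ) : 0 < tileScale n := by unfold tileScale; positivity

theorem tileScale_le_one (n : ℕ) : tileScale n ≤ 1 := pow_le_one₀ (by norm_num) (by norm_num)

theorem tileScale_succ (n : ℕ) : tileScale (n + 1) = tileScale n / 2 := by
  rw [tileScale, pow_succ, tileScale]; ring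

theorem tileScale_le_half_of_lt (hmn : m < n) : tileScale n ≤ tileScale m / 2 := by
  rw [← tileScale_succ]
  exact pow_le_pow_of_le_one (by norm_num) (by norm_num) hmn

theorem exists_tile (h0 : 0 < x) (h1 : x ≤ 1) :
    ∃ n, |x - 3 / 4 * tileScale n| ≤ tileScale n / 4 := by
  obtain ⟨n, hlt, hle⟩ := exists_nat_pow_near_of_lt_one h0 h1 (by norm_num : (0 : ℝ) < 1 / 2)
    (by norm_num)
  change tileScale (n + 1) < x at hlt
  change x ≤ tileScale n at hle
  rw [tileScale_succ] at hlt
  exact ⟨n, abs_le.2 ⟨by linarith, by linarith⟩⟩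

theorem le_abs_sub_tile_of_ne (hmn : m ≠ n) (hn : |x - 3 / 4 * tileScale n| ≤ tileScale n / 4) :
    tileScale m / 4 ≤ |x - 3 / 4 * tileScale m| := by
  rw [abs_le] at hn
  rcases hmn.lt_or_gt with hlt | hgt
  · have := tileScale_le_half_of_lt hlt
    exact le_abs.2 (Or.inr (by linarith))
  · have := tileScale_le_half_of_lt hgt
    exact le_abs.2 (Or.inl (by linarith))

theorem lt_abs_sub_tile_of_nonpos (hx : x ≤ 0) (n : ℕ) :
    tileScale n / 4 < |x - 3 / 4 * tileScale n| := by
  have := tileScale_pos n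
  exact lt_abs.2 (Or.inr (by linarith))

end Tile

/-- The segment `[-1, 0] × {0}` followed by the arches of half-width `δ n` and height `h n` over
the tiles. -/
def archDendrite (δ h : ℕ → ℝ) : Set (ℝ × ℝ) :=
  Icc (-1) 0 ×ˢ {0} ∪ ⋃ n, arch (tileScale n) (δ n) (h n)

/-- The parametrization of `archDendrite δ h` by its projection `[-1, 1]`. -/
noncomputable def archPath (δ h : ℕ → ℝ) (t : ℝ) : ℝ × ℝ :=
  (t + ∑' n, archShift (tileScale n) (δ n) (t - 3 / 4 * tileScale n),
    ∑' n, archHeight (tileScale n) (h n) (t - 3 / 4 * tileScale n))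

section ArchDendrite

variable {δ h : ℕ → ℝ}

theorem archDendrite_subset_Icc_prod_Ici : archDendrite δ h ⊆ Icc (-1) 1 ×ˢ Ici 0 := by
  rintro p (⟨hx, hy⟩ | hp)
  · exact ⟨⟨hx.1, hx.2.trans zero_le_one⟩, (mem_singleton_iff.1 hy).ge⟩
  · obtain ⟨n, hn, hy, -⟩ := mem_iUnion.1 hp
    have hpos := tileScale_pos n
    have hle := tileScale_le_one n
    rw [abs_le] at hn
    exact ⟨⟨by linarith, by linarith⟩, hy⟩

variable (H : ∀ n, ArchShape (tileScale n) (δ n) (h n))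
include H

theorem continuous_archPath : Continuous (archPath δ h) := by
  have hsum : Summable tileScale := summable_geometric_of_lt_one (by norm_num) (by norm_num)
  have hshift (n : ℕ) : Continuous fun t =>
      archShift (tileScale n) (δ n) (t - 3 / 4 * tileScale n) :=
    continuous_archShift.comp (continuous_sub_right _)
  have hheight (n : ℕ) : Continuous fun t =>
      archHeight (tileScale n) (h n) (t - 3 / 4 * tileScale n) :=
    continuous_archHeight.comp (continuous_sub_right _)
  exact (continuous_id.add (continuous_tsum hshift hsum fun n _ =>
      abs_archShift_le (H n).width_nonneg (tileScale_pos n).le)).prodMk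
    (continuous_tsum hheight hsum fun n _ =>
      abs_archHeight_le (H n).height_le (tileScale_pos n).le)

theorem archPath_of_nonpos {t : ℝ} (ht : t ≤ 0) : archPath δ h t = (t, 0) := by
  have hshift (n : ℕ) : archShift (tileScale n) (δ n) (t - 3 / 4 * tileScale n) = 0 :=
    archShift_eq_zero (H n).width_nonneg (lt_abs_sub_tile_of_nonpos ht n).le
  have hheight (n : ℕ) : archHeight (tileScale n) (h n) (t - 3 / 4 * tileScale n) = 0 :=
    archHeight_eq_zero (lt_abs_sub_tile_of_nonpos ht n).le
  simp [archPath, hshift, hheight]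

theorem archPath_of_mem_tile {s : ℝ} {n : ℕ} (hs : |s| ≤ tileScale n / 4) :
    archPath δ h (3 / 4 * tileScale n + s) = (3 / 4 * tileScale n + s +
      archShift (tileScale n) (δ n) s, archHeight (tileScale n) (h n) s) := by
  have hsub : 3 / 4 * tileScale n + s - 3 / 4 * tileScale n = s := by ring
  have hfar {m : ℕ} (hm : m ≠ n) := le_abs_sub_tile_of_ne hm (hsub.symm ▸ hs)
  rw [archPath, tsum_eq_single n fun m hm => archShift_eq_zero (H m).width_nonneg (hfar hm),
    tsum_eq_single n fun m hm => archHeight_eq_zero (hfar hm), hsub]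

theorem archPath_image : archPath δ h '' Icc (-1) 1 = archDendrite δ h := by
  refine subset_antisymm ?_ (union_subset ?_ (iUnion_subset fun n => ?_))
  · rintro _ ⟨t, ⟨ht1, ht2⟩, rfl⟩
    rcases le_or_gt t 0 with ht | ht
    · rw [archPath_of_nonpos H ht]
      exact Or.inl ⟨⟨ht1, ht⟩, rfl⟩
    · obtain ⟨n, hn⟩ := exists_tile ht ht2
      rw [← add_sub_cancel (3 / 4 * tileScale n) t, archPath_of_mem_tile H hn]
      exact Or.inr (mem_iUnion.2 ⟨n, (H n).mem_arch hn⟩)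
  · rintro ⟨x, _⟩ ⟨hx, rfl⟩
    exact ⟨x, ⟨hx.1, hx.2.trans zero_le_one⟩, archPath_of_nonpos H hx.2⟩
  · intro p hp
    obtain ⟨s, hs, rfl⟩ := (H n).exists_eq hp
    refine ⟨3 / 4 * tileScale n + s, ?_, archPath_of_mem_tile H hs⟩
    have hpos := tileScale_pos n
    have hle := tileScale_le_one n
    rw [abs_le] at hs
    exact ⟨by linarith, by linarith⟩

theorem mem_arch_of_mem_archDendrite {p : ℝ × ℝ} (hp : p ∈ archDendrite δ h) {n : ℕ}
    (hn : |p.1 - 3 / 4 * tileScale n| ≤ tileScale n / 4) :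
    p ∈ arch (tileScale n) (δ n) (h n) := by
  rcases hp with ⟨hx, -⟩ | hp
  · exact absurd hn (lt_abs_sub_tile_of_nonpos hx.2 n).not_ge
  obtain ⟨m, hm⟩ := mem_iUnion.1 hp
  rcases eq_or_ne m n with rfl | hmn
  · exact hm
  have hfar_m := le_abs_sub_tile_of_ne hmn hn
  have hfar_n := le_abs_sub_tile_of_ne hmn.symm hm.1
  have hpos_m := tileScale_pos m
  have hpos_n := tileScale_pos n
  have hδm := (H m).width_le
  have hδn := (H n).width_le
  obtain ⟨-, hy0, -, hyδ, -⟩ := hm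
  have hy : p.2 = 0 := hy0.eq_or_lt.elim Eq.symm fun hlt => by linarith [hyδ hlt]
  exact ⟨hn, hy0, hy ▸ (H n).height_nonneg, fun hlt => absurd hlt hy.not_gt,
    fun hlt => by linarith⟩

theorem eq_of_mem_archDendrite_of_fst_eq {p q : ℝ × ℝ} (hp : p ∈ archDendrite δ h)
    (hq : q ∈ archDendrite δ h) (hpq : p.1 = q.1)
    (hne : ∀ n, |p.1 - 3 / 4 * tileScale n| ≠ δ n) : p = q := by
  refine Prod.ext hpq ?_
  by_cases htile : ∃ n, |p.1 - 3 / 4 * tileScale n| ≤ tileScale n / 4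
  · obtain ⟨n, hn⟩ := htile
    obtain ⟨-, hp0, -, hpδ, hph⟩ := mem_arch_of_mem_archDendrite H hp hn
    obtain ⟨-, hq0, -, hqδ, hqh⟩ := mem_arch_of_mem_archDendrite H hq (hpq ▸ hn)
    have := hne n
    grind
  · have hzero : ∀ q ∈ archDendrite δ h, q.1 = p.1 → q.2 = 0 := by
      rintro q (hq | hq) hqp
      · exact hq.2
      · obtain ⟨m, hm⟩ := mem_iUnion.1 hq
        exact absurd ⟨m, hqp ▸ hm.1⟩ htile
    rw [hzero p hp rfl, hzero q hq hpq.symm]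

theorem isDendrite_archDendrite : IsDendrite (archDendrite δ h) := by
  have hcount : (⋃ n, {x | |x - 3 / 4 * tileScale n| = δ n}).Countable := by
    refine countable_iUnion fun n => Set.Finite.countable ?_
    refine (Set.toFinite {3 / 4 * tileScale n + δ n, 3 / 4 * tileScale n - δ n}).subset ?_
    intro x hx
    rcases (abs_eq (H n).width_nonneg).1 hx with hx | hx
    · exact Or.inl (by linarith)
    · exact Or.inr (by rw [mem_singleton_iff]; linarith)
  rw [← archPath_image H]
  refine isDendrite_image_Icc (by norm_num) (continuous_archPath H).continuousOn hcount ?_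
  rw [archPath_image H]
  intro p hp q hq hpq hE
  exact eq_of_mem_archDendrite_of_fst_eq H hp hq hpq fun n hn => hE (mem_iUnion.2 ⟨n, hn⟩)

end ArchDendrite

section EffectivelyClosed

theorem exists_computable_eq_mul_tileScale (k j : ℕ) :
    ∃ q : ℕ → ℚ, Computable q ∧ ∀ n, (q n : ℝ) = k / 2 ^ j * tileScale n := by
  refine ⟨fun n => k * (1 / 2) ^ (n + j), computable_nat_mul_half_pow (Computable.const k)
    (Primrec.nat_add.to_comp.comp Computable.id (Computable.const j)), fun n => ?_⟩
  push_cast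
  rw [pow_add, tileScale, one_div_pow 2 j]
  ring

variable {δ h : ℕ → ℝ} (H : ∀ n, ArchShape (tileScale n) (δ n) (h n))
include H

/-- The open window `|x - c| < 5 / 16 * r` contains the closed tile, but it does not meet the bumps
over the neighbouring tiles. -/
theorem mem_arch_of_pos {p : ℝ × ℝ} (hp : p ∈ archDendrite δ h) (hy : 0 < p.2) {n : ℕ}
    (hn : |p.1 - 3 / 4 * tileScale n| < 5 / 16 * tileScale n) :
    p ∈ arch (tileScale n) (δ n) (h n) := by
  rcases hp with hp | hp
  · exact absurd hp.2 hy.ne'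
  obtain ⟨m, hm⟩ := mem_iUnion.1 hp
  have hbump : |p.1 - 3 / 4 * tileScale m| ≤ tileScale m / 8 :=
    (hm.2.2.2.1 hy).trans (H m).width_le
  rw [abs_le] at hbump
  rw [abs_lt] at hn
  rcases lt_trichotomy m n with hlt | rfl | hgt
  · linarith [tileScale_le_half_of_lt hlt]
  · exact hm
  · linarith [tileScale_le_half_of_lt hgt]

theorem snd_le_tileScale {p : ℝ × ℝ} (hp : p ∈ archDendrite δ h) {n : ℕ}
    (hn : p.1 < tileScale n) : p.2 ≤ tileScale n := by
  rcases hp with hp | hp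
  · exact hp.2.le.trans (tileScale_pos n).le
  obtain ⟨m, hm⟩ := mem_iUnion.1 hp
  have hmn : n ≤ m := by
    by_contra! hlt
    linarith [tileScale_le_half_of_lt hlt, (abs_le.1 hm.1).1]
  calc p.2 ≤ h m := hm.2.2.1
    _ ≤ tileScale m := (H m).height_le
    _ ≤ tileScale n := pow_le_pow_of_le_one (by norm_num) (by norm_num) hmn

theorem mem_archDendrite_iff (hfull : ∀ n, 0 < δ n → h n = tileScale n) {p : ℝ × ℝ} :
    p ∈ archDendrite δ h ↔ p ∈ Icc (-1) 1 ×ˢ Ici 0 ∧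
      (∀ n, p.1 < tileScale n → p.2 ≤ tileScale n) ∧
      (∀ n, |p.1 - 3 / 4 * tileScale n| < 5 / 16 * tileScale n → 0 < p.2 →
        |p.1 - 3 / 4 * tileScale n| ≤ δ n) ∧
      (∀ n, |p.1 - 3 / 4 * tileScale n| < 5 / 16 * tileScale n → p.2 ≤ h n) ∧
      (∀ n, |p.1 - 3 / 4 * tileScale n| < δ n → tileScale n ≤ p.2) := by
  constructor
  · refine fun hp => ⟨archDendrite_subset_Icc_prod_Ici hp, fun n hn => snd_le_tileScale H hp hn,
      fun n hn hy => (mem_arch_of_pos H hp hy hn).2.2.2.1 hy, fun n hn => ?_, fun n hn => ?_⟩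
    · rcases le_or_gt p.2 0 with hy | hy
      · exact hy.trans (H n).height_nonneg
      · exact (mem_arch_of_pos H hp hy hn).2.2.1
    · have htile : |p.1 - 3 / 4 * tileScale n| ≤ tileScale n / 4 := by
        linarith [(H n).width_le, tileScale_pos n]
      have hbar : p.2 = h n := (mem_arch_of_mem_archDendrite H hp htile).2.2.2.2 hn
      exact (hbar.trans (hfull n ((abs_nonneg _).trans_lt hn))).ge
  · rintro ⟨⟨⟨hx1, hx2⟩, hy⟩, hcone, hside, htop, hbar⟩
    rcases le_or_gt p.1 0 with hx | hx
    · refine Or.inl ⟨⟨hx1, hx⟩, hy.antisymm' (le_of_forall_gt fun ε hε => ?_)⟩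
      obtain ⟨n, hn⟩ := exists_pow_lt_of_lt_one hε (by norm_num : (1 / 2 : ℝ) < 1)
      exact (hcone n (hx.trans_lt (tileScale_pos n))).trans_lt hn
    · obtain ⟨n, hn⟩ := exists_tile hx hx2
      have hwindow : |p.1 - 3 / 4 * tileScale n| < 5 / 16 * tileScale n := by
        linarith [tileScale_pos n]
      exact Or.inr (mem_iUnion.2 ⟨n, hn, hy, htop n hwindow, hside n hwindow, fun hlt =>
        (htop n hwindow).antisymm ((H n).height_le.trans (hbar n hlt))⟩)

theorem isPi01Closed_archDendrite (hfull : ∀ n, 0 < δ n → h n = tileScale n)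
    (hδ : LowerSemicomputable δ) (hδ_neg : LowerSemicomputable fun n => -δ n)
    (hh_neg : LowerSemicomputable fun n => -h n) : IsPi01Closed (archDendrite δ h) := by
  obtain ⟨r, hr, hr_eq⟩ := exists_computable_eq_mul_tileScale 1 0
  obtain ⟨c, hc, hc_eq⟩ := exists_computable_eq_mul_tileScale 3 2
  obtain ⟨w, hw, hw_eq⟩ := exists_computable_eq_mul_tileScale 5 4
  have hconst (q : ℚ) : LowerSemicomputable fun _ : ℕ => (q : ℝ) :=
    lowerSemicomputable_ratCast (Computable.const q)
  have hr_pos := lowerSemicomputable_ratCast hr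
  have hr_neg := lowerSemicomputable_ratCast (computable_rat_neg hr)
  have hwindow := effectivelyShort_neg_abs_fst_sub_add (lowerSemicomputable_ratCast hw) hc
  have hleft := effectivelyShort_neg_fst_add (hconst (-1))
  have hright := effectivelyShort_fst_add (hconst (-1))
  have hbelow := effectivelyShort_neg_snd_add (hconst 0)
  have hcone := (effectivelyShort_neg_fst_add hr_pos).min (effectivelyShort_snd_add hr_neg)
  have hside := hwindow.min ((effectivelyShort_snd_add (hconst 0)).min
    (effectivelyShort_abs_fst_sub_add hδ_neg hc))
  have htop := hwindow.min (effectivelyShort_snd_add hh_neg)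
  have hbar := (effectivelyShort_neg_abs_fst_sub_add hδ hc).min
    (effectivelyShort_neg_snd_add hr_pos)
  convert ((hleft.isPi01Closed.inter hright.isPi01Closed).inter hbelow.isPi01Closed).inter
    (hcone.isPi01Closed.inter (hside.isPi01Closed.inter
      (htop.isPi01Closed.inter hbar.isPi01Closed)))
  ext p
  have hmin (a b : ℝ) : min a b ≤ 0 ↔ (0 < a → b ≤ 0) := by
    rw [min_le_iff, ← not_lt, imp_iff_not_or]
  simp only [mem_archDendrite_iff H hfull, mem_inter_iff, mem_prod, mem_Icc, mem_Ici, mem_ofPred_eq,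
    neg_le (a := (1 : ℝ)), hmin, Rat.cast_neg, hr_eq, hc_eq, hw_eq]
  norm_num

end EffectivelyClosed

/-! ### Computable subcontinua decide which arches are flat -/

theorem exists_fst_eq_of_hausdorffDist_lt {J K : Set (ℝ × ℝ)} (hJ : IsContinuum J)
    (hK : IsCompact K) {ε : ℝ} (hJK : hausdorffDist J K < ε) {a b : ℝ × ℝ} (ha : a ∈ K)
    (hb : b ∈ K) {x : ℝ} (hax : a.1 + ε ≤ x) (hxb : x + ε ≤ b.1) : ∃ p ∈ J, p.1 = x := by
  have hfin : hausdorffEDist J K ≠ ⊤ := hausdorffEDist_ne_top_of_nonempty_of_bounded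
    hJ.2.nonempty ⟨a, ha⟩ hJ.1.isBounded hK.isBounded
  have hnear {q : ℝ × ℝ} (hq : q ∈ K) : ∃ p ∈ J, |p.1 - q.1| < ε := by
    obtain ⟨p, hp, hpq⟩ := exists_dist_lt_of_hausdorffDist_lt' hq hJK hfin
    exact ⟨p, hp, (le_max_left _ _).trans_lt hpq⟩
  obtain ⟨a', ha', haa'⟩ := hnear ha
  obtain ⟨b', hb', hbb'⟩ := hnear hb
  rw [abs_lt] at haa' hbb'
  exact hJ.2.isPreconnected.intermediate_value ha' hb' continuous_fst.continuousOn
    ⟨by linarith, by linarith⟩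

theorem IsComputableClosed.exists_computablePred {α : Type*} [Primcodable α] {J : Set (ℝ × ℝ)}
    (hJ : IsComputableClosed J) {q : α → ℚ × ℚ} (hq : Computable q) {ρ : α → ℚ}
    (hρ : Computable ρ) (hρ_pos : ∀ a, 0 < ρ a) :
    ∃ C : α → Prop, ComputablePred C ∧ (∀ a, C a → (J ∩ ballOfCode (q a, ρ a)).Nonempty) ∧
      ∀ a, ¬ C a → (((q a).1 : ℝ), ((q a).2 : ℝ)) ∉ J := by
  have hmeets : REPred fun a => (J ∩ ballOfCode (q a, ρ a)).Nonempty :=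
    rePred_comp (p := fun c => (J ∩ ballOfCode c).Nonempty) hJ.2 (hq.pair hρ)
  refine exists_computablePred_of_forall_or hmeets (hJ.1.rePred_notMem hq) fun a => ?_
  refine or_iff_not_imp_right.2 fun ha => ⟨_, not_not.1 ha, ?_⟩
  change dist _ _ < (ρ a : ℝ)
  rw [dist_self]
  exact_mod_cast hρ_pos a

theorem exists_archShape {A B : ℕ → Prop} (hA : REPred A) (hB : REPred B)
    (hAB : ∀ n, A n → ¬ B n) : ∃ δ h : ℕ → ℝ, (∀ n, ArchShape (tileScale n) (δ n) (h n)) ∧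
      LowerSemicomputable δ ∧ LowerSemicomputable (fun n => -δ n) ∧
      LowerSemicomputable (fun n => -h n) ∧ (∀ n, 0 < δ n → h n = tileScale n) ∧
      (∀ n, A n → h n = 0) ∧ ∀ n, B n → 0 < δ n := by
  classical
  obtain ⟨δ, hδ, hδ_neg, hδ_mem, hδ_pos⟩ := exists_computable_real_pos_iff hB
    (Primrec.nat_add.to_comp.comp Computable.id (Computable.const 3))
  obtain ⟨r, hr, hr_eq⟩ := exists_computable_eq_mul_tileScale 1 0
  have hr_eq (n : ℕ) : (r n : ℝ) = tileScale n := by simpa using hr_eq n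
  have hh_neg : LowerSemicomputable fun n => if A n then (0 : ℝ) else -tileScale n := by
    refine LowerSemicomputable.ite hA ?_ ?_ fun n => (neg_neg_of_pos (tileScale_pos n)).le
    · simpa [hr_eq] using lowerSemicomputable_ratCast (computable_rat_neg hr)
    · simpa using lowerSemicomputable_ratCast (Computable.const (α := ℕ) 0)
  refine ⟨δ, fun n => if A n then 0 else tileScale n, fun n => ?_, hδ, hδ_neg, ?_, fun n hn => ?_,
    fun n hn => if_pos hn, fun n => (hδ_pos n).2⟩
  · have hpos := tileScale_pos n
    refine ⟨(hδ_mem n).1, (hδ_mem n).2.trans_eq ?_, by dsimp only; split_ifs <;> linarith,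
      by dsimp only; split_ifs <;> linarith⟩
    rw [id, pow_add, tileScale]
    ring
  · simpa [apply_ite] using hh_neg
  · exact if_neg fun hAn => hAB n hAn ((hδ_pos n).1 hn)

section Separation

variable {δ h : ℕ → ℝ} (H : ∀ n, ArchShape (tileScale n) (δ n) (h n))
include H

theorem one_mem_archDendrite : ((1, 0) : ℝ × ℝ) ∈ archDendrite δ h := by
  have hδ := (H 0).width_le
  have h0 : tileScale 0 = 1 := pow_zero _
  refine Or.inr (mem_iUnion.2 ⟨0, ?_⟩)
  rw [h0] at hδ ⊢
  have habs : |(1 : ℝ) - 3 / 4 * 1| = 1 / 4 := by norm_num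
  refine ⟨habs.le, le_rfl, (H 0).height_nonneg, fun hlt => absurd hlt (lt_irrefl _), fun hlt => ?_⟩
  rw [habs] at hlt
  linarith

theorem eq_of_mem_archDendrite_of_fst_eq_center {p : ℝ × ℝ} (hp : p ∈ archDendrite δ h) {n : ℕ}
    (hn : 0 < δ n) (hx : p.1 = 3 / 4 * tileScale n) : p = (3 / 4 * tileScale n, h n) := by
  have hzero : |p.1 - 3 / 4 * tileScale n| = 0 := by rw [hx, sub_self, abs_zero]
  have hpn := mem_arch_of_mem_archDendrite H hp (n := n) (by linarith [tileScale_pos n])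
  exact Prod.ext hx (hpn.2.2.2.2 (hzero.trans_lt hn))

theorem height_pos_of_dist_lt {p : ℝ × ℝ} (hp : p ∈ archDendrite δ h) {n : ℕ}
    (hdist : dist p (3 / 4 * tileScale n, tileScale n) < tileScale n / 8) : 0 < h n := by
  obtain ⟨hx, hy⟩ := max_lt_iff.1 hdist
  change |p.1 - 3 / 4 * tileScale n| < tileScale n / 8 at hx
  change |p.2 - tileScale n| < tileScale n / 8 at hy
  have hpos := tileScale_pos n
  have hpn := mem_arch_of_mem_archDendrite H hp (n := n) (by linarith)
  linarith [(abs_lt.1 hy).1, hpn.2.2.1]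

theorem le_hausdorffDist_archDendrite {A B : ℕ → Prop} (hAB : ComputablyInseparable A B)
    (hA : ∀ n, A n → h n = 0) (hB : ∀ n, B n → 0 < δ n)
    (hfull : ∀ n, 0 < δ n → h n = tileScale n) {J : Set (ℝ × ℝ)} (hJH : J ⊆ archDendrite δ h)
    (hJ : IsComputableClosed J) (hJcont : IsContinuum J) :
    1 / 8 ≤ hausdorffDist J (archDendrite δ h) := by
  by_contra! hlt
  have hcross (n : ℕ) : ∃ p ∈ J, p.1 = 3 / 4 * tileScale n :=
    exists_fst_eq_of_hausdorffDist_lt hJcont (isDendrite_archDendrite H).1.1 hlt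
      (a := (-1, 0)) (Or.inl ⟨⟨le_rfl, by norm_num⟩, rfl⟩) (one_mem_archDendrite H)
      (by linarith [tileScale_pos n]) (by linarith [tileScale_le_one n])
  obtain ⟨c, hc, hc_eq⟩ := exists_computable_eq_mul_tileScale 3 2
  obtain ⟨r, hr, hr_eq⟩ := exists_computable_eq_mul_tileScale 1 0
  obtain ⟨ρ, hρ, hρ_eq⟩ := exists_computable_eq_mul_tileScale 1 3
  norm_num at hc_eq hr_eq hρ_eq
  have hρ_pos (n : ℕ) : 0 < ρ n := by
    have := tileScale_pos n
    rw [← Rat.cast_pos (K := ℝ), hρ_eq]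
    positivity
  obtain ⟨C, hC, hCball, hCtip⟩ := hJ.exists_computablePred (hc.pair hr) hρ hρ_pos
  refine hAB C hC (fun n hAn hCn => ?_) fun n hBn => ?_
  · obtain ⟨p, hpJ, hp⟩ := hCball n hCn
    change dist p ((c n : ℝ), (r n : ℝ)) < (ρ n : ℝ) at hp
    rw [hc_eq, hr_eq, hρ_eq, one_div_mul_eq_div] at hp
    exact (height_pos_of_dist_lt H (hJH hpJ) hp).ne' (hA n hAn)
  · by_contra hCn
    obtain ⟨p, hpJ, hpx⟩ := hcross n
    refine hCtip n hCn ?_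
    simpa only [hc_eq, hr_eq, hfull n (hB n hBn),
      eq_of_mem_archDendrite_of_fst_eq_center H (hJH hpJ) (hB n hBn) hpx] using hpJ

end Separation

theorem exists_pi01_dendrite_not_star_including_computable_dendrite :
    ∃ H : Set (ℝ × ℝ), IsPi01Closed H ∧ IsDendrite H ∧
      ∃ ε : ℝ, 0 < ε ∧ ∀ J : Set (ℝ × ℝ), J ⊆ H → IsComputableClosed J → IsDendrite J →
        ε ≤ Metric.hausdorffDist J H := by
  obtain ⟨A, B, hA, hB, hdisj, hsep⟩ := exists_computablyInseparable
  obtain ⟨δ, h, hshape, hδ, hδ_neg, hh_neg, hfull, hAh, hBδ⟩ := exists_archShape hA hB hdisj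
  exact ⟨archDendrite δ h, isPi01Closed_archDendrite hshape hfull hδ hδ_neg hh_neg,
    isDendrite_archDendrite hshape, 1 / 8, by norm_num, fun J hJH hJ hJdendrite =>
      le_hausdorffDist_archDendrite hshape hsep hAh hBδ hfull hJH hJ hJdendrite.1⟩
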